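/- arXiv:1307.7672 — 2 statements merged into one kernel-verified Lean document; each statement's English description precedes it below -/
import Mathlib

section
/- Let A be a finite-dimensional (left) Leibniz algebra over an algebraically closed field of characteristic zero. If a subalgebra H of A is minimal in the set of all Engel subalgebras of A (H = E_A(a) for some a ∈ A, and no Engel subalgebra E_A(b), b ∈ A, is properly contained in H), then H is a Cartan subalgebra of A. In particular, A has a Cartan subalgebra. -/
/-- Span of all brackets `[u, v]` with `u ∈ p`, `v ∈ q`. -/
def bracketSpan {K A : Type*} [Field K] [AddCommGroup A] [Module K A]
    (br : A →ₗ[K] A →ₗ[K] A) (p q : Submodule K A) : Submodule K A :=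
  Submodule.span K {x | ∃ a ∈ p, ∃ b ∈ q, br a b = x}

/-- Derived series: `derSeries br 0 = A` and
`derSeries br (n+1) = [derSeries br n, derSeries br n]`; so `derSeries br n = A^(n+1)`.
The algebra is solvable iff some term vanishes. -/
def derSeries {K A : Type*} [Field K] [AddCommGroup A] [Module K A]
    (br : A →ₗ[K] A →ₗ[K] A) : ℕ → Submodule K A
  | 0 => ⊤
  | n + 1 => bracketSpan br (derSeries br n) (derSeries br n)

/-- Lower central series: `lcs br 0 = A` and `lcs br (n+1) = [A, lcs br n]`;
so `lcs br n = A^(n+1)`.  The algebra is nilpotent iff some term vanishes. -/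
def lcs {K A : Type*} [Field K] [AddCommGroup A] [Module K A]
    (br : A →ₗ[K] A →ₗ[K] A) : ℕ → Submodule K A
  | 0 => ⊤
  | n + 1 => bracketSpan br ⊤ (lcs br n)

/-- Lower central series of a subalgebra `H` (computed inside the ambient algebra):
`lcsIn br H 0 = H`, `lcsIn br H (n+1) = [H, lcsIn br H n]`.
A subalgebra `H` is nilpotent iff some term vanishes. -/
def lcsIn {K A : Type*} [Field K] [AddCommGroup A] [Module K A]
    (br : A →ₗ[K] A →ₗ[K] A) (H : Submodule K A) : ℕ → Submodule K A
  | 0 => H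
  | n + 1 => bracketSpan br H (lcsIn br H n)

/-- The Engel subalgebra `E_A(a)`: the Fitting null component of the left
multiplication operator `L_a = br a`, i.e. `{x : A | ∃ k, (L_a)^k x = 0}`. -/
def engel {K A : Type*} [Field K] [AddCommGroup A] [Module K A]
    (br : A →ₗ[K] A →ₗ[K] A) (a : A) : Submodule K A :=
  ⨆ k : ℕ, LinearMap.ker ((br a) ^ k)

/-- A Cartan subalgebra: a nilpotent subalgebra that equals its own normalizer. -/
def IsCartanSubalgebra {K A : Type*} [Field K] [AddCommGroup A] [Module K A]
    (br : A →ₗ[K] A →ₗ[K] A) (H : Submodule K A) : Prop :=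
  (∀ x ∈ H, ∀ y ∈ H, br x y ∈ H) ∧
  (∃ m : ℕ, lcsIn br H m = ⊥) ∧
  (∀ x : A, (∀ h ∈ H, br x h ∈ H ∧ br h x ∈ H) → x ∈ H)

/-! The argument is due to Barnes. Let `H = E_A(a)` be minimal and `y ∈ H`. The operators
`L_{y + c a}` act on `H` and on `A / H`. As `L_a` is injective on `A / H`, so is `L_{y + c a}` for
all but at most `dim A / H` scalars `c`; for the other `c` one has `E_A(y + c a) ≤ H`, hence
equality by minimality, so `L_{y + c a}` is nilpotent on `H`. For `i > 0` the coefficient of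
`X ^ i` in the characteristic polynomial of `L_{y + c a}` on `H` is a polynomial in `c` of degree
less than `dim H`, so having at least `dim H` zeros it vanishes, in particular at `c = 0`. The
constant coefficient at `c = 0` vanishes because `L_y` is singular on `H`. Thus every `L_y` with
`y ∈ H` is nilpotent on `H`, and the classical theorem of Engel makes `H` nilpotent.

In a left Leibniz algebra `[a, a]` need not vanish, nor need `a` lie in `E_A(a)`. But `[a, a]`
lies in the kernel of `x ↦ L_x`, and this yields `a' ∈ E_A(a)` with `L_{a'} = L_a`. This element
is what shows both that `L_y` is singular on `H` and that `H` is its own normalizer.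
-/

open Module Polynomial

section LinearAlgebra

lemma coe_restrict_pow_apply {R M : Type*} [Semiring R] [AddCommMonoid M] [Module R M]
    {f : M →ₗ[R] M} {N : Submodule R M} (hf : ∀ x ∈ N, f x ∈ N) (n : ℕ) (x : N) :
    (((f.restrict hf) ^ n) x : M) = (f ^ n) x := by
  rw [End.pow_restrict, LinearMap.coe_restrict_apply]

lemma exists_mem_pow_apply_sub_eq_zero {R M : Type*} [Ring R] [AddCommGroup M] [Module R M]
    {f : M →ₗ[R] M} {N : Submodule R M} [IsArtinian R N] (hf : ∀ x ∈ N, f x ∈ N)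
    {x : M} (hx : f x ∈ N) : ∃ z ∈ N, ∃ k : ℕ, (f ^ k) (x - z) = 0 := by
  obtain ⟨n, hn⟩ := Filter.eventually_atTop.mp
    (f.restrict hf).eventually_codisjoint_ker_pow_range_pow
  obtain ⟨u, _, hu, ⟨w, rfl⟩, huw⟩ := Submodule.codisjoint_iff_exists_add_eq.mp
    (hn (n + 1) n.le_succ) ⟨f x, hx⟩
  -- Fitting: `f x = u + f ^ (n + 1) w` with `f ^ (n + 1) u = 0`; subtract `z = f ^ n w` from `x`.
  have hz : f x - f ((f ^ n) w) = u := by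
    rw [← End.mul_apply, ← pow_succ', ← coe_restrict_pow_apply hf, sub_eq_iff_eq_add]
    exact congrArg Subtype.val huw.symm
  refine ⟨(f ^ n) w, coe_restrict_pow_apply hf n w ▸ Subtype.property _, n + 2, ?_⟩
  rw [pow_succ, End.mul_apply, map_sub, hz, ← coe_restrict_pow_apply hf,
    LinearMap.mem_ker.mp hu, Submodule.coe_zero]

lemma pow_add_apply_eq_zero_of_leibniz {R M N P : Type*} [CommSemiring R]
    [AddCommMonoid M] [AddCommMonoid N] [AddCommMonoid P] [Module R M] [Module R N] [Module R P]
    (B : M →ₗ[R] N →ₗ[R] P) {D : End R M} {E : End R N} {F : End R P}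
    (h : ∀ x y, F (B x y) = B (D x) y + B x (E y)) {i j : ℕ} {x : M} {y : N}
    (hx : (D ^ i) x = 0) (hy : (E ^ j) y = 0) : (F ^ (i + j)) (B x y) = 0 := by
  induction i generalizing x y j with
  | zero => simp [show x = 0 by simpa using hx]
  | succ i ihi =>
    induction j generalizing y with
    | zero => simp [show y = 0 by simpa using hy]
    | succ j ihj =>
      rw [pow_succ, End.mul_apply] at hx hy
      have hDx : (F ^ (i + (j + 1))) (B (D x) y) = 0 :=
        ihi hx (by rwa [pow_succ, End.mul_apply])
      have hEy : (F ^ (i + 1 + j)) (B x (E y)) = 0 := ihj hy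
      rw [← add_assoc, pow_succ, End.mul_apply, h, map_add, hEy, add_zero,
        add_right_comm, add_assoc, hDx]

lemma exists_mem_ne_zero_apply_eq_zero_of_pow_apply_eq_zero {R M : Type*} [Semiring R]
    [AddCommMonoid M] [Module R M] {f : End R M} {N : Submodule R M} (hf : ∀ x ∈ N, f x ∈ N)
    {x : M} (hx : x ∈ N) (hx0 : x ≠ 0) {k : ℕ} (hk : (f ^ k) x = 0) :
    ∃ y ∈ N, y ≠ 0 ∧ f y = 0 := by
  induction k generalizing x with
  | zero => exact absurd hk hx0
  | succ k ih =>
    obtain hfx | hfx := eq_or_ne (f x) 0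
    · exact ⟨x, hx, hx0, hfx⟩
    · exact ih (hf x hx) hfx (by rwa [pow_succ, End.mul_apply] at hk)

lemma isNilpotent_restrict_iff {R M : Type*} [CommSemiring R] [AddCommMonoid M] [Module R M]
    {f : End R M} {N : Submodule R M} [Module.Finite R N] (hf : ∀ x ∈ N, f x ∈ N) :
    IsNilpotent (f.restrict hf) ↔ ∀ x ∈ N, ∃ k : ℕ, (f ^ k) x = 0 := by
  simp only [End.isNilpotent_iff_of_finite, Subtype.forall, Subtype.ext_iff,
    coe_restrict_pow_apply, ZeroMemClass.coe_zero]

section Charpoly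

variable {R M : Type*} [CommRing R] [AddCommGroup M] [Module R M]
  [Module.Free R M] [Module.Finite R M]

lemma isNilpotent_iff_forall_charpoly_coeff_eq_zero [IsDomain R] {f : End R M} :
    IsNilpotent f ↔ ∀ i < finrank R M, f.charpoly.coeff i = 0 := by
  rw [LinearMap.isNilpotent_iff_charpoly]
  refine ⟨fun h i hi => by rw [h, coeff_X_pow, if_neg hi.ne], fun h => ?_⟩
  rw [← f.charpoly_natDegree, f.charpoly_monic.eq_X_pow_iff_natDegree_le_natTrailingDegree,
    f.charpoly_natDegree]
  exact le_natTrailingDegree f.charpoly_monic.ne_zero h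

lemma exists_natDegree_le_forall_eval_eq_charpoly_coeff [Nontrivial R] (f g : End R M) {i j : ℕ}
    (hij : i + j = finrank R M) :
    ∃ p : R[X], p.natDegree ≤ j ∧ ∀ c : R, p.eval c = (f + c • g).charpoly.coeff i := by
  let b := Free.chooseBasis R (End R M)
  let χ := LinearMap.polyCharpoly (LinearMap.id : End R M →ₗ[R] End R M) b
  let v : Free.ChooseBasisIndex R (End R M) → R[X] := fun k => C (b.repr g k) * X + C (b.repr f k)
  refine ⟨MvPolynomial.aeval v (χ.coeff i), ?_, fun c => ?_⟩
  · rw [← mul_one j]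
    exact MvPolynomial.aeval_natDegree_le _
      (LinearMap.polyCharpoly_coeff_isHomogeneous _ b i j hij).totalDegree_le v
      fun k => natDegree_linear_le
  · have hv : (fun k => aeval c (v k)) = b.repr (f + c • g) := by
      ext k
      simp [v, mul_comm c, add_comm]
    rw [← coe_aeval_eq_eval, MvPolynomial.comp_aeval_apply, hv, MvPolynomial.aeval_eq_eval,
      ← coeff_map, LinearMap.polyCharpoly_map_eq_charpoly, LinearMap.id_apply]

end Charpoly

variable {K V : Type*} [Field K] [AddCommGroup V] [Module K V] [FiniteDimensional K V]

lemma isNilpotent_of_forall_isNilpotent_add_smul {f g : End K V} {s : Finset K}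
    (hs : finrank K V ≤ s.card) (hnil : ∀ c ∈ s, IsNilpotent (f + c • g))
    (hf : ∃ x ≠ 0, f x = 0) : IsNilpotent f := by
  rw [isNilpotent_iff_forall_charpoly_coeff_eq_zero]
  rintro (_ | i) hi
  · exact f.charpoly_constantCoeff_eq_zero_iff.mpr hf
  obtain ⟨p, hp, hpc⟩ := exists_natDegree_le_forall_eval_eq_charpoly_coeff f g
    (Nat.add_sub_of_le hi.le)
  have hp0 : p = 0 := by
    refine eq_zero_of_natDegree_lt_card_of_eval_eq_zero' p s (fun c hc => ?_) (by omega)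
    rw [hpc, isNilpotent_iff_forall_charpoly_coeff_eq_zero.mp (hnil c hc) _ hi]
  simpa [hp0] using (hpc 0).symm

lemma exists_finset_forall_notMem_injective_add_smul (f : End K V) {g : End K V}
    (hg : Function.Injective g) :
    ∃ t : Finset K, t.card ≤ finrank K V ∧ ∀ c ∉ t, Function.Injective (f + c • g) := by
  classical
  let e := LinearEquiv.ofInjectiveEndo g hg
  let h : End K V := -(e.symm ∘ₗ f)
  refine ⟨h.charpoly.roots.toFinset, ?_, fun c hc => ?_⟩
  · rw [← h.charpoly_natDegree]
    exact (Multiset.toFinset_card_le _).trans (card_roots' _)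
  · refine (injective_iff_map_eq_zero _).mpr fun x hx => by_contra fun hx0 => hc ?_
    have hhx : h x = c • x := by
      have hfx : f x = -(c • e x) := eq_neg_of_add_eq_zero_left hx
      simp [h, hfx]
    have hev : h.HasEigenvalue c :=
      End.hasEigenvalue_of_hasEigenvector (End.hasEigenvector_iff.mpr
        ⟨End.mem_eigenspace_iff.mpr hhx, hx0⟩)
    rw [Multiset.mem_toFinset, mem_roots h.charpoly_monic.ne_zero]
    exact (End.hasEigenvalue_iff_isRoot_charpoly h c).mp hev

lemma exists_finset_forall_mem_of_add_smul_apply_mem {f g : End K V} {N : Submodule K V}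
    (hK : (finrank K V : Cardinal) ≤ Cardinal.mk K) (hf : ∀ x ∈ N, f x ∈ N)
    (hg : ∀ x, g x ∈ N ↔ x ∈ N) :
    ∃ s : Finset K, finrank K N ≤ s.card ∧ ∀ c ∈ s, ∀ x, (f + c • g) x ∈ N → x ∈ N := by
  classical
  let f' : End K (V ⧸ N) := N.mapQ N f hf
  let g' : End K (V ⧸ N) := N.mapQ N g fun x hx => (hg x).mpr hx
  have hg' : Function.Injective g' := by
    refine (injective_iff_map_eq_zero _).mpr fun q hq => ?_
    obtain ⟨x, rfl⟩ := N.mkQ_surjective q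
    exact (Submodule.Quotient.mk_eq_zero N).mpr
      ((hg x).mp ((Submodule.Quotient.mk_eq_zero N).mp hq))
  obtain ⟨t, ht, htinj⟩ := exists_finset_forall_notMem_injective_add_smul f' hg'
  obtain ⟨s, hs⟩ := Cardinal.exists_finset_le_card K _ hK
  refine ⟨s \ t, ?_, fun c hc x hx => ?_⟩
  · have hdim := N.finrank_quotient_add_finrank
    have hcard := Finset.le_card_sdiff t s
    omega
  · refine (Submodule.Quotient.mk_eq_zero N).mp
      ((injective_iff_map_eq_zero _).mp (htinj c (Finset.mem_sdiff.mp hc).2) _ ?_)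
    exact (Submodule.Quotient.mk_eq_zero N).mpr hx

end LinearAlgebra

/-- The left Leibniz identity for the multiplication `br`: each left multiplication `br a` is a
derivation of `br`. -/
def IsLeibniz {K A : Type*} [Field K] [AddCommGroup A] [Module K A]
    (br : A →ₗ[K] A →ₗ[K] A) : Prop :=
  ∀ a b c : A, br a (br b c) = br (br a b) c + br b (br a c)

section Engel

variable {K A : Type*} [Field K] [AddCommGroup A] [Module K A] {br : A →ₗ[K] A →ₗ[K] A}
  {a x y : A} {H : Submodule K A}

lemma mem_engel : x ∈ engel br a ↔ ∃ k : ℕ, (br a ^ k) x = 0 := by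
  have h : engel br a = End.maxGenEigenspace (br a) 0 := by
    simp only [engel, ← End.iSup_genEigenspace_eq, End.genEigenspace_zero_nat]
  rw [h, End.mem_maxGenEigenspace, zero_smul, sub_zero]

lemma apply_mem_engel_iff : br a x ∈ engel br a ↔ x ∈ engel br a := by
  simp only [mem_engel, ← End.mul_apply, ← pow_succ]
  refine ⟨fun ⟨k, hk⟩ => ⟨k + 1, hk⟩, fun ⟨k, hk⟩ => ⟨k, ?_⟩⟩
  rw [pow_succ', End.mul_apply, hk, map_zero]

lemma engel_le_of_forall_apply_mem (h : ∀ x, br a x ∈ H → x ∈ H) : engel br a ≤ H := by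
  intro x hx
  obtain ⟨k, hk⟩ := mem_engel.mp hx
  induction k generalizing x with
  | zero => simp [show x = 0 by simpa using hk]
  | succ k ih =>
    rw [pow_succ, End.mul_apply] at hk
    exact h x (ih (mem_engel.mpr ⟨k, hk⟩) hk)

lemma isNilpotent_restrict_iff_le_engel [FiniteDimensional K H] (hH : ∀ x ∈ H, br a x ∈ H) :
    IsNilpotent ((br a).restrict hH) ↔ H ≤ engel br a := by
  simp only [isNilpotent_restrict_iff, SetLike.le_def, mem_engel]

namespace IsLeibniz

variable (h : IsLeibniz br)
include h

lemma apply_mem_engel (hx : x ∈ engel br a) (hy : y ∈ engel br a) : br x y ∈ engel br a := by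
  obtain ⟨i, hi⟩ := mem_engel.mp hx
  obtain ⟨j, hj⟩ := mem_engel.mp hy
  exact mem_engel.mpr ⟨i + j, pow_add_apply_eq_zero_of_leibniz br (h a) hi hj⟩

lemma apply_self_mem_ker : br a a ∈ LinearMap.ker br :=
  LinearMap.ext fun c => left_eq_add.mp ((h a a c).trans (add_comm _ _))

lemma apply_mem_ker (hx : x ∈ LinearMap.ker br) : br a x ∈ LinearMap.ker br := by
  rw [LinearMap.mem_ker] at hx ⊢
  ext c
  simpa [hx] using (h a x c).symm

lemma exists_mem_engel_apply_eq [FiniteDimensional K H] (hH : ∀ x ∈ H, br a x ∈ H) (ha : a ∈ H) :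
    ∃ a' ∈ H, a' ∈ engel br a ∧ br a' = br a := by
  have haa : br a a ∈ H ⊓ LinearMap.ker br := ⟨hH a ha, h.apply_self_mem_ker⟩
  obtain ⟨z, ⟨hzH, hz⟩, k, hk⟩ := exists_mem_pow_apply_sub_eq_zero
    (fun x hx => Submodule.mem_inf.mpr ⟨hH x hx.1, h.apply_mem_ker hx.2⟩) haa
  exact ⟨a - z, H.sub_mem ha hzH, mem_engel.mpr ⟨k, hk⟩,
    by rw [map_sub, LinearMap.mem_ker.mp hz, sub_zero]⟩

lemma exists_mem_ne_zero_apply_eq_zero [FiniteDimensional K H] (hH : ∀ x ∈ H, br a x ∈ H)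
    (ha : a ∈ H) (hbot : H ≠ ⊥) : ∃ x ∈ H, x ≠ 0 ∧ br a x = 0 := by
  obtain ⟨a', ha'H, ha', heq⟩ := h.exists_mem_engel_apply_eq hH ha
  obtain rfl | ha'0 := eq_or_ne a' 0
  · obtain ⟨x, hx, hx0⟩ := H.exists_mem_ne_zero_of_ne_bot hbot
    exact ⟨x, hx, hx0, by rw [← heq, map_zero, LinearMap.zero_apply]⟩
  · obtain ⟨k, hk⟩ := mem_engel.mp ha'
    exact exists_mem_ne_zero_apply_eq_zero_of_pow_apply_eq_zero hH ha'H ha'0 hk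

lemma mem_engel_of_forall_apply_mem_engel [FiniteDimensional K A]
    (hx : ∀ z ∈ engel br a, br z x ∈ engel br a) : x ∈ engel br a := by
  obtain ⟨a', -, ha', heq⟩ :=
    h.exists_mem_engel_apply_eq (fun _ _ => Submodule.mem_top) (Submodule.mem_top (x := a))
  exact apply_mem_engel_iff.mp (heq ▸ hx a' ha')

attribute [local instance] LieRing.ofAssociativeRing

/-- The operators `L_y` with `y ∈ H`, restricted to the subalgebra `H`, as a Lie algebra of
endomorphisms of `H`. Engel's theorem for Lie algebras is applied to it. -/
def leftMulLieSubalgebra (hH : ∀ x ∈ H, ∀ y ∈ H, br x y ∈ H) :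
    LieSubalgebra K (End K H) where
  carrier := {f | ∃ y, ∃ hy : y ∈ H, f = (br y).restrict (hH y hy)}
  add_mem' := by
    rintro _ _ ⟨y, hy, rfl⟩ ⟨z, hz, rfl⟩
    exact ⟨y + z, H.add_mem hy hz, by ext; simp⟩
  zero_mem' := ⟨0, H.zero_mem, by ext; simp⟩
  smul_mem' := by
    rintro c _ ⟨y, hy, rfl⟩
    exact ⟨c • y, H.smul_mem c hy, by ext; simp⟩
  lie_mem' := by
    rintro _ _ ⟨y, hy, rfl⟩ ⟨z, hz, rfl⟩
    refine ⟨br y z, hH y hy z hz, ?_⟩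
    ext x
    simp [Ring.lie_def, h y z x]

lemma lcsIn_le_map_lowerCentralSeries (hH : ∀ x ∈ H, ∀ y ∈ H, br x y ∈ H) (k : ℕ) :
    lcsIn br H k ≤
      (LieModule.lowerCentralSeries K (h.leftMulLieSubalgebra hH) H k).toSubmodule.map
        H.subtype := by
  induction k with
  | zero => simp [lcsIn]
  | succ k ih =>
    rw [lcsIn, bracketSpan, Submodule.span_le]
    rintro _ ⟨u, hu, _, hv, rfl⟩
    obtain ⟨w, hw, rfl⟩ := ih hv
    let f : h.leftMulLieSubalgebra hH := ⟨(br u).restrict (hH u hu), u, hu, rfl⟩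
    refine ⟨⁅f, w⁆, ?_, rfl⟩
    rw [LieModule.lowerCentralSeries_succ]
    exact LieSubmodule.lie_mem_lie (LieSubmodule.mem_top f) hw

lemma exists_lcsIn_eq_bot [FiniteDimensional K H] (hH : ∀ x ∈ H, ∀ y ∈ H, br x y ∈ H)
    (hengel : ∀ y ∈ H, H ≤ engel br y) : ∃ m : ℕ, lcsIn br H m = ⊥ := by
  have hnil : LieModule.IsNilpotent (h.leftMulLieSubalgebra hH) H := by
    refine (LieModule.isNilpotent_iff_forall' (R := K)).mpr ?_
    rintro ⟨_, y, hy, rfl⟩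
    exact (isNilpotent_restrict_iff_le_engel (hH y hy)).mpr (hengel y hy)
  obtain ⟨m, hm⟩ := (LieModule.isNilpotent_iff K _ H).mp hnil
  refine ⟨m, le_bot_iff.mp ((h.lcsIn_le_map_lowerCentralSeries hH m).trans ?_)⟩
  rw [hm, LieSubmodule.bot_toSubmodule, Submodule.map_bot]

lemma engel_le_engel_of_minimal [FiniteDimensional K A]
    (hK : (finrank K A : Cardinal) ≤ Cardinal.mk K)
    (hmin : ∀ b : A, engel br b ≤ engel br a → engel br b = engel br a) (hy : y ∈ engel br a) :
    engel br a ≤ engel br y := by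
  obtain hbot | hbot := eq_or_ne (engel br a) ⊥
  · exact hbot.le.trans bot_le
  have hf : ∀ x ∈ engel br a, br y x ∈ engel br a := fun x hx => h.apply_mem_engel hy hx
  have hg : ∀ x ∈ engel br a, br a x ∈ engel br a := fun x hx => apply_mem_engel_iff.mpr hx
  obtain ⟨s, hs, hsmem⟩ := exists_finset_forall_mem_of_add_smul_apply_mem hK hf
    fun x => apply_mem_engel_iff
  have hpencil (c : K) : br (y + c • a) = br y + c • br a := by rw [map_add, map_smul]
  have hfg (c : K) : ∀ x ∈ engel br a, br (y + c • a) x ∈ engel br a := fun x hx => by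
    rw [hpencil]
    exact add_mem (hf x hx) (Submodule.smul_mem _ c (hg x hx))
  have hnil : ∀ c ∈ s, IsNilpotent ((br y).restrict hf + c • (br a).restrict hg) := fun c hc => by
    have hle : engel br (y + c • a) ≤ engel br a :=
      engel_le_of_forall_apply_mem fun x hx => hsmem c hc x (hpencil c ▸ hx)
    convert (isNilpotent_restrict_iff_le_engel (hfg c)).mpr (hmin _ hle).ge using 1
    ext
    simp
  obtain ⟨x, hx, hx0, hyx⟩ := h.exists_mem_ne_zero_apply_eq_zero hf hy hbot
  refine (isNilpotent_restrict_iff_le_engel hf).mp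
    (isNilpotent_of_forall_isNilpotent_add_smul hs hnil ⟨⟨x, hx⟩, ?_, Subtype.ext hyx⟩)
  exact Subtype.coe_ne_coe.mp hx0

end IsLeibniz

end Engel

theorem leibniz_minimal_engel_is_cartan_general
    {K A : Type*} [Field K] [AddCommGroup A] [Module K A] [FiniteDimensional K A]
    (hK : (finrank K A : Cardinal) ≤ Cardinal.mk K)
    (br : A →ₗ[K] A →ₗ[K] A)
    (leibniz : ∀ a b c : A, br a (br b c) = br (br a b) c + br b (br a c))
    (a : A)
    (hmin : ∀ b : A, engel br b ≤ engel br a → engel br b = engel br a) :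
    IsCartanSubalgebra br (engel br a) := by
  have h : IsLeibniz br := leibniz
  have hsub : ∀ x ∈ engel br a, ∀ y ∈ engel br a, br x y ∈ engel br a :=
    fun _ hx _ hy => h.apply_mem_engel hx hy
  refine ⟨hsub, h.exists_lcsIn_eq_bot hsub fun _ hy => ?_, fun x hx => ?_⟩
  · exact h.engel_le_engel_of_minimal hK hmin hy
  · exact h.mem_engel_of_forall_apply_mem_engel fun z hz => (hx z hz).2

/-- a subalgebra of a finite-dimensional (left) Leibniz algebra over
an algebraically closed field of characteristic zero that is minimal among all
Engel subalgebras is a Cartan subalgebra; in particular Cartan subalgebras exist. -/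
theorem leibniz_minimal_engel_is_cartan
    {K A : Type*} [Field K] [IsAlgClosed K] [CharZero K]
    [AddCommGroup A] [Module K A] [FiniteDimensional K A]
    (br : A →ₗ[K] A →ₗ[K] A)
    (leibniz : ∀ a b c : A, br a (br b c) = br (br a b) c + br b (br a c))
    (a : A)
    (hmin : ∀ b : A, engel br b ≤ engel br a → engel br b = engel br a) :
    IsCartanSubalgebra br (engel br a) ∧
      ∃ H : Submodule K A, IsCartanSubalgebra br H := by
  have hK : (Module.finrank K A : Cardinal) ≤ Cardinal.mk K :=
    Cardinal.natCast_le_aleph0.trans (Cardinal.aleph0_le_mk K)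
  have hC := leibniz_minimal_engel_is_cartan_general hK br leibniz a hmin
  exact ⟨hC, _, hC⟩
end

section
/- Let A be a finite-dimensional semisimple (left) Leibniz algebra over an algebraically closed field of characteristic zero. Then A = (S_1 ⊕ S_2 ⊕ ... ⊕ S_k) ⊕ Leib(A) as a direct sum of vector spaces, where S = S_1 ⊕ ... ⊕ S_k is a subalgebra of A on which the bracket is antisymmetric (so S is a Lie algebra) and each S_j is an ideal of S that is a simple Lie algebra. -/
/-- Derived series of a subspace `I` (computed inside the ambient algebra):
`derSeriesIn br I 0 = I`, `derSeriesIn br I (n+1) = [derSeriesIn br I n, derSeriesIn br I n]`.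
A subalgebra/ideal `I` is solvable iff some term vanishes. -/
def derSeriesIn {K A : Type*} [Field K] [AddCommGroup A] [Module K A]
    (br : A →ₗ[K] A →ₗ[K] A) (I : Submodule K A) : ℕ → Submodule K A
  | 0 => I
  | n + 1 => bracketSpan br (derSeriesIn br I n) (derSeriesIn br I n)

/-- `Leib(A)`: the span of all squares `[a, a]`. -/
def leibIdeal {K A : Type*} [Field K] [AddCommGroup A] [Module K A]
    (br : A →ₗ[K] A →ₗ[K] A) : Submodule K A :=
  Submodule.span K {x | ∃ a : A, br a a = x}

/-!
If `A` is semisimple, the Lie algebra `L = A / Leib(A)` has trivial radical, so by Cartan's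
criterion it is semisimple. Since `Leib(A)` multiplies `A` trivially from the left, `A` is an
`L`-module under left multiplication and `A → L` is a surjection of `L`-modules.

This surjection splits. If `L` acts nontrivially on `V`, so does some simple ideal, and its Casimir
operator commutes with `L`, maps `V` into `L • V` and is not nilpotent, having nonzero trace.
Fitting's lemma and induction on `dim V` then give `V = V^L + L • V`, so invariants lift along
surjections of `L`-modules. Applied to `Hom(L, A) → Hom(L, L)`, this lifts the identity of `L` to an
`L`-linear section `σ : L → A`.

Equivariance of `σ` says `[σ x, σ y] = σ [x, y]`. Hence the image of `σ` is a Lie algebra isomorphic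
to `L` and complementary to `Leib(A)`, and the `S_j` are the images of the simple ideals of `L`.
-/

open Module LieModule LieAlgebra

section PerfectLieAlgebra

variable {R L M : Type*} [CommRing R] [LieRing L] [LieAlgebra R L]
  [AddCommGroup M] [Module R M] [LieRingModule L M] [LieModule R L M]

theorem lie_lie_le_lie_lie (I J : LieIdeal R L) (N : LieSubmodule R L M) :
    ⁅⁅I, J⁆, N⁆ ≤ ⁅I, ⁅J, N⁆⁆ ⊔ ⁅J, ⁅I, N⁆⁆ := by
  refine (LieSubmodule.lie_le_iff ..).mpr fun x hx n hn ↦ ?_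
  rw [← LieSubmodule.mem_toSubmodule, LieSubmodule.lieIdeal_oper_eq_linear_span'] at hx
  induction hx using Submodule.span_induction with
  | mem x hx =>
    obtain ⟨a, ha, b, hb, rfl⟩ := hx
    have hab := LieSubmodule.lie_mem_lie ha (LieSubmodule.lie_mem_lie hb hn)
    have hba := LieSubmodule.lie_mem_lie hb (LieSubmodule.lie_mem_lie ha hn)
    simpa only [lie_lie] using sub_mem
      ((le_sup_left : ⁅I, ⁅J, N⁆⁆ ≤ _ ⊔ ⁅J, ⁅I, N⁆⁆) hab) ((le_sup_right : ⁅J, ⁅I, N⁆⁆ ≤ _) hba)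
  | zero => simp
  | add x y _ _ hx hy => simpa only [add_lie] using add_mem hx hy
  | smul t x _ hx => simpa only [smul_lie] using SMulMemClass.smul_mem t hx

theorem isTrivial_of_isNilpotent_of_perfect
    (hL : ⁅(⊤ : LieIdeal R L), (⊤ : LieIdeal R L)⁆ = ⊤) [IsNilpotent L M] : IsTrivial L M := by
  have lie_le_lie_lie (N : LieSubmodule R L M) :
      ⁅(⊤ : LieIdeal R L), N⁆ ≤ ⁅(⊤ : LieIdeal R L), ⁅(⊤ : LieIdeal R L), N⁆⁆ := by
    simpa only [hL, sup_idem] using lie_lie_le_lie_lie ⊤ ⊤ N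
  have lie_top_le_lcs (n : ℕ) :
      ⁅(⊤ : LieIdeal R L), (⊤ : LieSubmodule R L M)⁆ ≤ lowerCentralSeries R L M n := by
    induction n with
    | zero => exact le_top
    | succ n ih =>
      rw [lowerCentralSeries_succ]
      exact (lie_le_lie_lie ⊤).trans (LieSubmodule.mono_lie_right ⊤ ih)
  obtain ⟨n, hn⟩ := (isNilpotent_iff R L M).mp ‹_›
  have lie_top_eq_bot := le_bot_iff.mp (hn ▸ lie_top_le_lcs n)
  exact ⟨fun x m ↦ (LieSubmodule.lie_eq_bot_iff _ _).mp lie_top_eq_bot x trivial m trivial⟩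

theorem lie_top_eq_top_of_isSimple [IsSimple R L] :
    ⁅(⊤ : LieIdeal R L), (⊤ : LieIdeal R L)⁆ = ⊤ := by
  refine lie_eq_self_of_isAtom_of_nonabelian ⊤ isAtom_top fun h ↦ IsSimple.non_abelian R (L := L) ?_
  exact (lie_abelian_iff_equiv_lie_abelian LieIdeal.topEquiv).mp h

theorem exists_isAtom_not_isTrivial [IsSemisimple R L] (h : ¬ IsTrivial L M) :
    ∃ I : LieIdeal R L, IsAtom I ∧ ¬ IsTrivial I M := by
  by_contra! hI
  have ker_eq_top : LieModule.ker R L M = ⊤ := by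
    rw [eq_top_iff, ← IsSemisimple.sSup_atoms_eq_top]
    refine sSup_le fun I hatom x hx ↦ (LieModule.mem_ker R L M x).mpr fun m ↦ ?_
    have := hI I hatom
    exact trivial_lie_zero I M ⟨x, hx⟩ m
  exact h ⟨fun x m ↦ (LieModule.mem_ker R L M x).mp (ker_eq_top ▸ LieSubmodule.mem_top x) m⟩

end PerfectLieAlgebra

section TraceForm

variable {K L V : Type*} [Field K] [LieRing L] [LieAlgebra K L]
  [AddCommGroup V] [Module K V] [LieRingModule L V] [LieModule K L V] [FiniteDimensional K V]

theorem isTrivial_of_traceForm_eq_zero [CharZero K]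
    (hL : ⁅(⊤ : LieIdeal K L), (⊤ : LieIdeal K L)⁆ = ⊤) (h : traceForm K L V = 0) :
    IsTrivial L V := by
  have nilpotent_toEnd := (isNilpotent_iff_forall' (R := K)).mp
    (isNilpotent_derivedSeries_of_traceForm_eq_zero h)
  have derivedSeries_eq_top : derivedSeries K L 1 = ⊤ := hL
  have : LieModule.IsNilpotent L V := (isNilpotent_iff_forall' (R := K)).mpr fun x ↦
    nilpotent_toEnd ⟨x, derivedSeries_eq_top ▸ LieSubmodule.mem_top x⟩
  exact isTrivial_of_isNilpotent_of_perfect hL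

theorem nondegenerate_traceForm_of_isSimple [CharZero K] [IsSimple K L] (h : ¬ IsTrivial L V) :
    (traceForm K L V).Nondegenerate := by
  let radical : LieIdeal K L :=
    InvariantForm.orthogonal (traceForm K L V) (traceForm_lieInvariant K L V) ⊤
  have mem_radical (x : L) : x ∈ radical ↔ ∀ y, traceForm K L V y x = 0 := by
    simp [radical, InvariantForm.mem_orthogonal]
  have radical_ne_top : radical ≠ ⊤ := fun htop ↦
    h <| isTrivial_of_traceForm_eq_zero lie_top_eq_top_of_isSimple <| LinearMap.ext₂ fun x y ↦
      (mem_radical y).mp (htop ▸ LieSubmodule.mem_top y) x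
  have radical_eq_bot := (IsSimple.eq_bot_or_eq_top radical).resolve_right radical_ne_top
  refine (traceForm_isSymm K L V).isRefl.nondegenerate_iff_separatingRight.mpr fun x hx ↦ ?_
  exact (LieSubmodule.mem_bot x).mp (radical_eq_bot ▸ (mem_radical x).mpr hx)

end TraceForm

section Casimir

open LinearMap (BilinForm)

variable {K L J M P V ι : Type*} [Field K] [LieRing L] [LieRing J] [LieAlgebra K J]
  [AddCommGroup M] [Module K M] [LieRingModule L M] [AddCommGroup P] [Module K P]
  [AddCommGroup V] [Module K V] [LieRingModule J V] [LieModule K J V] [Fintype ι] [DecidableEq ι]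

theorem sum_lie_dualBasis {B : BilinForm K M} (hB : B.Nondegenerate) (hinv : B.lieInvariant L)
    (b : Basis ι K M) (φ : M →ₗ[K] M →ₗ[K] P) (x : L) :
    ∑ i, φ ⁅x, B.dualBasis hB b i⁆ (b i) = -∑ i, φ (B.dualBasis hB b i) ⁅x, b i⁆ := by
  set d := B.dualBasis hB b
  have expand_dual (y : M) : ∑ j, B y (b j) • d j = y := by
    simpa only [d, BilinForm.dualBasis_repr_apply] using d.sum_repr y
  have repr_eq (y : M) (j : ι) : b.repr y j = B (d j) y := by
    simpa only [d, BilinForm.dualBasis_flip_dualBasis, BilinForm.flip_apply] using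
      BilinForm.dualBasis_repr_apply hB.flip d y j
  have expand (y : M) : ∑ j, B (d j) y • b j = y := by
    simpa only [repr_eq] using b.sum_repr y
  calc ∑ i, φ ⁅x, d i⁆ (b i)
      = ∑ i, ∑ j, B ⁅x, d i⁆ (b j) • φ (d j) (b i) := by
        refine Finset.sum_congr rfl fun i _ ↦ ?_
        conv_lhs => rw [← expand_dual ⁅x, d i⁆]
        simp only [map_sum, map_smul, LinearMap.sum_apply, LinearMap.smul_apply]
    _ = ∑ j, ∑ i, -(B (d i) ⁅x, b j⁆ • φ (d j) (b i)) := by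
        rw [Finset.sum_comm]
        simp only [hinv x, neg_smul]
    _ = -∑ j, φ (d j) ⁅x, b j⁆ := by
        simp only [Finset.sum_neg_distrib, neg_inj]
        refine Finset.sum_congr rfl fun j _ ↦ ?_
        conv_rhs => rw [← expand ⁅x, b j⁆]
        simp only [map_sum, map_smul]

variable (V) in
/-- The Casimir operator of a representation `V` of `J`, attached to a nondegenerate bilinear form
on `J`. It is defined through a basis of `J` and its dual basis. -/
noncomputable def casimir {B : BilinForm K J} (hB : B.Nondegenerate) (b : Basis ι K J) :
    Module.End K V :=
  ∑ i, toEnd K J V (B.dualBasis hB b i) * toEnd K J V (b i)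

theorem casimir_apply_mem {B : BilinForm K J} (hB : B.Nondegenerate) (b : Basis ι K J)
    {W : Submodule K V} (hW : ∀ (x : J) (v : V), ⁅x, v⁆ ∈ W) (v : V) : casimir V hB b v ∈ W := by
  simp only [casimir, LinearMap.sum_apply, Module.End.mul_apply, toEnd_apply_apply]
  exact sum_mem fun i _ ↦ hW _ _

theorem trace_casimir_traceForm (hB : (traceForm K J V).Nondegenerate) (b : Basis ι K J) :
    LinearMap.trace K V (casimir V hB b) = finrank K J := by
  have trace_summand (i : ι) : LinearMap.trace K V
      (toEnd K J V ((traceForm K J V).dualBasis hB b i) * toEnd K J V (b i)) = 1 :=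
    (BilinForm.apply_dualBasis_left hB b i i).trans (if_pos rfl)
  simp only [casimir, map_sum, trace_summand, Finset.sum_const, Finset.card_univ, nsmul_one,
    finrank_eq_card_basis b]

section Equivariance

variable [LieAlgebra K L] [LieRingModule L V] [LieModule K L V]

theorem commute_toEnd_casimir {I : LieIdeal K L} {B : BilinForm K I} (hB : B.Nondegenerate)
    (hinv : B.lieInvariant L) (b : Basis ι K I) (x : L) :
    Commute (toEnd K L V x) (casimir V hB b) := by
  let φ : I →ₗ[K] I →ₗ[K] Module.End K V :=
    (LinearMap.mul K (Module.End K V)).compl₁₂ (toEnd K I V) (toEnd K I V)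
  have toEnd_mul_toEnd (y : I) :
      toEnd K L V x * toEnd K I V y = toEnd K I V ⁅x, y⁆ + toEnd K I V y * toEnd K L V x :=
    LinearMap.ext fun v ↦ leibniz_lie x (y : L) v
  calc toEnd K L V x * casimir V hB b
      = (∑ i, φ ⁅x, B.dualBasis hB b i⁆ (b i) + ∑ i, φ (B.dualBasis hB b i) ⁅x, b i⁆)
          + casimir V hB b * toEnd K L V x := by
        simp only [casimir, Finset.mul_sum, Finset.sum_mul, ← Finset.sum_add_distrib]
        refine Finset.sum_congr rfl fun i _ ↦ ?_
        rw [← mul_assoc, toEnd_mul_toEnd, add_mul, mul_assoc, toEnd_mul_toEnd, mul_add, mul_assoc,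
          add_assoc]
        rfl
    _ = casimir V hB b * toEnd K L V x := by
        rw [sum_lie_dualBasis hB hinv b φ x, neg_add_cancel, zero_add]

variable (K L V) in
theorem exists_commute_toEnd_not_isNilpotent [CharZero K] [FiniteDimensional K L]
    [FiniteDimensional K V] [IsSemisimple K L] (h : ¬ IsTrivial L V) :
    ∃ c : Module.End K V, (∀ x : L, Commute (toEnd K L V x) c) ∧ ¬ IsNilpotent c ∧
      ∀ v, c v ∈ ⁅(⊤ : LieIdeal K L), (⊤ : LieSubmodule K L V)⁆ := by
  obtain ⟨I, hatom, hI⟩ := exists_isAtom_not_isTrivial (R := K) h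
  have := IsSemisimple.isSimple_of_isAtom I hatom
  have hB := nondegenerate_traceForm_of_isSimple (K := K) hI
  have hinv : (traceForm K I V).lieInvariant L := fun x y z ↦
    traceForm_apply_lie_apply' K L V x y z
  refine ⟨casimir V hB (finBasis K I), commute_toEnd_casimir hB hinv _, fun hc ↦ ?_, fun v ↦ ?_⟩
  · have finrank_eq_zero : (finrank K I : K) = 0 := by
      rw [← trace_casimir_traceForm hB (finBasis K I)]
      exact (LinearMap.isNilpotent_trace_of_isNilpotent hc).eq_zero
    have := finrank_zero_iff.mp (Nat.cast_eq_zero.mp finrank_eq_zero)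
    exact hI ⟨fun x v ↦ by rw [Subsingleton.elim x 0, zero_lie]⟩
  · refine casimir_apply_mem hB (finBasis K I)
      (W := (⁅(⊤ : LieIdeal K L), ⊤⁆ : LieSubmodule K L V)) ?_ v
    exact fun x w ↦ LieSubmodule.lie_mem_lie (LieSubmodule.mem_top (x : L)) (LieSubmodule.mem_top w)

end Equivariance

end Casimir

section CompleteReducibility

variable {K L V W : Type*} [Field K] [LieRing L] [LieAlgebra K L]
  [AddCommGroup V] [Module K V] [LieRingModule L V] [LieModule K L V]
  [AddCommGroup W] [Module K W] [LieRingModule L W] [LieModule K L W]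

theorem map_maxTrivSubmodule_sup_lie_top_le (f : V →ₗ⁅K,L⁆ W) :
    (maxTrivSubmodule K L V ⊔ ⁅(⊤ : LieIdeal K L), (⊤ : LieSubmodule K L V)⁆).map f ≤
      maxTrivSubmodule K L W ⊔ ⁅(⊤ : LieIdeal K L), (⊤ : LieSubmodule K L W)⁆ := by
  rw [LieSubmodule.map_sup, LieSubmodule.map_bracket_eq]
  refine sup_le_sup ?_ (LieSubmodule.mono_lie_right ⊤ le_top)
  exact LieSubmodule.map_le_iff_le_comap.mpr fun v hv ↦ (maxTrivHom f ⟨v, hv⟩).2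

variable [CharZero K] [FiniteDimensional K L] [IsSemisimple K L] [FiniteDimensional K V]

variable (K L V) in
theorem maxTrivSubmodule_sup_lie_top_eq_top :
    maxTrivSubmodule K L V ⊔ ⁅(⊤ : LieIdeal K L), (⊤ : LieSubmodule K L V)⁆ = ⊤ := by
  induction hn : finrank K V using Nat.strong_induction_on generalizing V with
  | _ n ih =>
  by_cases htriv : IsTrivial L V
  · rw [isTrivial_iff_max_triv_eq_top K L V |>.mp htriv, top_sup_eq]
  obtain ⟨c, hcomm, hc, hrange⟩ := exists_commute_toEnd_not_isNilpotent K L V htriv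
  obtain ⟨m, hm⟩ := Filter.eventually_atTop.mp c.eventually_isCompl_ker_pow_range_pow
  have fitting := (hm (m + 1) m.le_succ).sup_eq_top
  let U : LieSubmodule K L V :=
    { LinearMap.ker (c ^ (m + 1)) with
      lie_mem := fun {x v} hv ↦ by
        have hcv := LinearMap.congr_fun ((hcomm x).pow_right (m + 1)) v
        exact hcv.symm.trans ((congrArg (⁅x, ·⁆) hv).trans (lie_zero x)) }
  have finrank_lt : finrank K U < n := hn ▸ Submodule.finrank_lt fun hker ↦
    hc ⟨m + 1, LinearMap.ker_eq_top.mp hker⟩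
  have ker_le := map_maxTrivSubmodule_sup_lie_top_le U.incl
  rw [ih _ finrank_lt U rfl, LieSubmodule.map_incl_top] at ker_le
  refine eq_top_iff.mpr fun v _ ↦ ?_
  obtain ⟨u, hu, _, ⟨w, rfl⟩, rfl⟩ := Submodule.mem_sup.mp (fitting ▸ Submodule.mem_top (x := v))
  refine add_mem (ker_le hu) (le_sup_right (α := LieSubmodule K L V) ?_)
  rw [pow_succ', Module.End.mul_apply]
  exact hrange _

theorem exists_mem_maxTrivSubmodule_map_eq {f : V →ₗ⁅K,L⁆ W} (hf : Function.Surjective f) {w : W}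
    (hw : w ∈ maxTrivSubmodule K L W) : ∃ v ∈ maxTrivSubmodule K L V, f v = w := by
  obtain ⟨v, rfl⟩ := hf w
  let U := (maxTrivSubmodule K L W).comap f
  have mem_U : (⟨v, hw⟩ : U) ∈
      maxTrivSubmodule K L U ⊔ ⁅(⊤ : LieIdeal K L), (⊤ : LieSubmodule K L U)⁆ := by
    rw [maxTrivSubmodule_sup_lie_top_eq_top]
    trivial
  have lie_le_ker : ⁅(⊤ : LieIdeal K L), (⊤ : LieSubmodule K L U)⁆ ≤ (f.comp U.incl).ker :=
    (LieSubmodule.lie_le_iff ..).mpr fun x _ u _ ↦ by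
      rw [LieModuleHom.mem_ker, LieModuleHom.map_lie]
      exact u.2 x
  obtain ⟨u, hu, t, ht, hut⟩ := (LieSubmodule.mem_sup ..).mp mem_U
  refine ⟨u, fun x ↦ congrArg Subtype.val (hu x), ?_⟩
  have hft : f t = 0 := LieModuleHom.mem_ker.mp (lie_le_ker ht)
  have hfut : f (u + t) = f v := congrArg (f ∘ Subtype.val) hut
  rwa [map_add, hft, add_zero] at hfut

theorem exists_equivariant_rightInverse {f : V →ₗ⁅K,L⁆ W} (hf : Function.Surjective f) :
    ∃ s : W →ₗ⁅K,L⁆ V, ∀ w, f (s w) = w := by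
  have := Module.Finite.of_surjective (f : V →ₗ[K] W) hf
  let postcomp : (W →ₗ[K] V) →ₗ⁅K,L⁆ (W →ₗ[K] W) :=
    { LinearMap.compRight K (f : V →ₗ[K] W) with
      map_lie' := by intros; ext; simp }
  have postcomp_surjective : Function.Surjective postcomp := fun g ↦ by
    obtain ⟨s, hs⟩ := (f : V →ₗ[K] W).exists_rightInverse_of_surjective
      (LinearMap.range_eq_top.mpr hf)
    refine ⟨s ∘ₗ g, ?_⟩
    change ((f : V →ₗ[K] W) ∘ₗ s) ∘ₗ g = g
    rw [hs, LinearMap.id_comp]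
  have id_invariant : (LinearMap.id : W →ₗ[K] W) ∈ maxTrivSubmodule K L (W →ₗ[K] W) := by
    intro x
    ext
    simp
  obtain ⟨s, hs, hfs⟩ := exists_mem_maxTrivSubmodule_map_eq postcomp_surjective id_invariant
  exact ⟨maxTrivLinearMapEquivLieModuleHom ⟨s, hs⟩, fun w ↦ LinearMap.congr_fun hfs w⟩

end CompleteReducibility

section SimpleIdeals

theorem exists_fin_range_eq_of_sSupIndep {α : Type*} [CompleteLattice α] [WellFoundedGT α]
    {s : Set α} (hs : sSupIndep s) : ∃ (k : ℕ) (f : Fin k → α), Set.range f = s ∧ iSupIndep f := by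
  have := (WellFoundedGT.finite_of_sSupIndep hs).to_subtype
  obtain ⟨k, ⟨e⟩⟩ := Finite.exists_equiv_fin s
  refine ⟨k, fun i ↦ e.symm i, ?_, (sSupIndep_iff s).mp hs |>.comp e.symm.injective⟩
  exact (e.symm.surjective.range_comp Subtype.val).trans Subtype.range_coe

theorem exists_iSupIndep_isAtom_iSup_eq_top (R L : Type*) [CommRing R] [LieRing L] [LieAlgebra R L]
    [IsNoetherian R L] [IsSemisimple R L] :
    ∃ (k : ℕ) (I : Fin k → LieIdeal R L), (∀ j, IsAtom (I j)) ∧ iSupIndep I ∧ ⨆ j, I j = ⊤ := by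
  obtain ⟨k, I, hrange, hindep⟩ := exists_fin_range_eq_of_sSupIndep
    (IsSemisimple.sSupIndep_isAtom (R := R) (L := L))
  refine ⟨k, I, fun j ↦ hrange.subset (Set.mem_range_self j), hindep, ?_⟩
  rw [← sSup_range, hrange, IsSemisimple.sSup_atoms_eq_top]

end SimpleIdeals

section BracketPreservingMap

variable {K L A : Type*} [Field K] [LieRing L] [LieAlgebra K L] [AddCommGroup A] [Module K A]
  {br : A →ₗ[K] A →ₗ[K] A} {σ : L →ₗ[K] A}

theorem bracketSpan_map_map (hσ : ∀ x y, br (σ x) (σ y) = σ ⁅x, y⁆) (I J : LieIdeal K L) :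
    bracketSpan br (I.toSubmodule.map σ) (J.toSubmodule.map σ) = ⁅I, J⁆.toSubmodule.map σ := by
  rw [LieSubmodule.lieIdeal_oper_eq_linear_span', Submodule.map_span, bracketSpan]
  congr 1
  ext a
  constructor
  · rintro ⟨_, ⟨x, hx, rfl⟩, _, ⟨y, hy, rfl⟩, rfl⟩
    exact ⟨⁅x, y⁆, ⟨x, hx, y, hy, rfl⟩, (hσ x y).symm⟩
  · rintro ⟨_, ⟨x, hx, y, hy, rfl⟩, rfl⟩
    exact ⟨σ x, ⟨x, hx, rfl⟩, σ y, ⟨y, hy, rfl⟩, hσ x y⟩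

theorem bracketSpan_map_self_ne_bot (hσ : ∀ x y, br (σ x) (σ y) = σ ⁅x, y⁆)
    (hinj : Function.Injective σ) {I : LieIdeal K L} (hI : ¬ IsLieAbelian I) :
    bracketSpan br (I.toSubmodule.map σ) (I.toSubmodule.map σ) ≠ ⊥ := by
  rw [bracketSpan_map_map hσ]
  refine (Submodule.map_injective_of_injective hinj).ne_iff' (Submodule.map_bot σ) |>.mpr ?_
  rwa [Ne, LieSubmodule.toSubmodule_eq_bot, ← LieSubmodule.lie_abelian_iff_lie_self_eq_bot]

theorem apply_eq_neg_apply_of_mem_range (hσ : ∀ x y, br (σ x) (σ y) = σ ⁅x, y⁆) {a b : A}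
    (ha : a ∈ LinearMap.range σ) (hb : b ∈ LinearMap.range σ) : br a b = -br b a := by
  obtain ⟨x, rfl⟩ := ha
  obtain ⟨y, rfl⟩ := hb
  rw [hσ, hσ, ← map_neg, lie_skew]

theorem apply_mem_map_lieIdeal (hσ : ∀ x y, br (σ x) (σ y) = σ ⁅x, y⁆) (I : LieIdeal K L) {s a : A}
    (hs : s ∈ LinearMap.range σ) (ha : a ∈ I.toSubmodule.map σ) :
    br s a ∈ I.toSubmodule.map σ ∧ br a s ∈ I.toSubmodule.map σ := by
  obtain ⟨x, rfl⟩ := hs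
  obtain ⟨y, hy, rfl⟩ := ha
  rw [hσ, hσ]
  exact ⟨Submodule.mem_map_of_mem (I.lie_mem hy),
    Submodule.mem_map_of_mem (lie_mem_left K L I y x hy)⟩

theorem iSup_map_lieIdeal_eq_range {ι : Type*} {I : ι → LieIdeal K L} (hI : ⨆ j, I j = ⊤) :
    ⨆ j, (I j).toSubmodule.map σ = LinearMap.range σ := by
  rw [← Submodule.map_iSup, ← LieSubmodule.iSup_toSubmodule, hI, LieSubmodule.top_toSubmodule,
    Submodule.map_top]

theorem eq_bot_or_eq_map_of_isSimple (hσ : ∀ x y, br (σ x) (σ y) = σ ⁅x, y⁆) (I : LieIdeal K L)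
    [IsSimple K I] {P : Submodule K A} (hPI : P ≤ I.toSubmodule.map σ)
    (hP : ∀ s ∈ I.toSubmodule.map σ, ∀ x ∈ P, br s x ∈ P) :
    P = ⊥ ∨ P = I.toSubmodule.map σ := by
  let preimage : LieIdeal K I :=
    { P.comap (σ ∘ₗ I.toSubmodule.subtype) with
      lie_mem := fun {x y} hy ↦ by
        have := hP (σ x) ⟨x, x.2, rfl⟩ (σ y) hy
        rwa [hσ] at this }
  have range_eq : LinearMap.range (σ ∘ₗ I.toSubmodule.subtype) = I.toSubmodule.map σ := by
    rw [LinearMap.range_comp, Submodule.range_subtype]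
  have map_preimage : preimage.toSubmodule.map (σ ∘ₗ I.toSubmodule.subtype) = P :=
    Submodule.map_comap_eq_of_le (hPI.trans_eq range_eq.symm)
  rw [← map_preimage, ← range_eq]
  refine (IsSimple.eq_bot_or_eq_top preimage).imp (fun h ↦ ?_) fun h ↦ ?_
  · rw [h, LieSubmodule.bot_toSubmodule, Submodule.map_bot]
  · rw [h, LieSubmodule.top_toSubmodule, Submodule.map_top]

end BracketPreservingMap

/-- The left Leibniz identity for a bilinear multiplication `br`: left multiplications are
derivations. -/
def IsLeftLeibniz {K A : Type*} [Field K] [AddCommGroup A] [Module K A]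
    (br : A →ₗ[K] A →ₗ[K] A) : Prop :=
  ∀ a b c : A, br a (br b c) = br (br a b) c + br b (br a c)

section LeftLeibniz

variable {K A : Type*} [Field K] [AddCommGroup A] [Module K A] {br : A →ₗ[K] A →ₗ[K] A}

theorem apply_self_mem_leibIdeal (br : A →ₗ[K] A →ₗ[K] A) (a : A) : br a a ∈ leibIdeal br :=
  Submodule.subset_span ⟨a, rfl⟩

theorem apply_add_apply_swap_mem_leibIdeal (br : A →ₗ[K] A →ₗ[K] A) (a b : A) :
    br a b + br b a ∈ leibIdeal br := by
  have polarization : br a b + br b a = br (a + b) (a + b) - br a a - br b b := by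
    simp only [map_add, LinearMap.add_apply]
    abel
  rw [polarization]
  exact sub_mem (sub_mem (apply_self_mem_leibIdeal br _) (apply_self_mem_leibIdeal br _))
    (apply_self_mem_leibIdeal br _)

namespace IsLeftLeibniz

theorem leibIdeal_le_ker (h : IsLeftLeibniz br) : leibIdeal br ≤ LinearMap.ker br := by
  refine Submodule.span_le.mpr ?_
  rintro _ ⟨a, rfl⟩
  exact LinearMap.ext fun c ↦ right_eq_add.mp (h a a c)

theorem apply_mem_leibIdeal (h : IsLeftLeibniz br) (a : A) {x : A} (hx : x ∈ leibIdeal br) :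
    br a x ∈ leibIdeal br := by
  have br_x : br x = 0 := h.leibIdeal_le_ker hx
  simpa only [br_x, LinearMap.zero_apply, add_zero] using apply_add_apply_swap_mem_leibIdeal br a x

theorem derSeriesIn_two_eq_bot (h : IsLeftLeibniz br) {P : Submodule K A}
    (hP : ∀ a ∈ P, ∀ b ∈ P, br a b ∈ leibIdeal br) : derSeriesIn br P 2 = ⊥ := by
  have derSeriesIn_one_le : derSeriesIn br P 1 ≤ leibIdeal br := by
    refine Submodule.span_le.mpr ?_
    rintro _ ⟨a, ha, b, hb, rfl⟩
    exact hP a ha b hb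
  refine Submodule.span_eq_bot.mpr ?_
  rintro _ ⟨a, ha, b, -, rfl⟩
  exact LinearMap.congr_fun (h.leibIdeal_le_ker (derSeriesIn_one_le ha)) b

/-- The canonical Lie algebra `A / Leib(A)` of a left Leibniz algebra `A`. It is a type synonym
because its Lie bracket depends on `br` and not only on the subspace `leibIdeal br`. -/
def LieQuotient (_ : IsLeftLeibniz br) : Type _ := A ⧸ leibIdeal br

variable (h : IsLeftLeibniz br)

instance : AddCommGroup h.LieQuotient := inferInstanceAs (AddCommGroup (A ⧸ leibIdeal br))

instance : Module K h.LieQuotient := inferInstanceAs (Module K (A ⧸ leibIdeal br))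

instance [FiniteDimensional K A] : FiniteDimensional K h.LieQuotient :=
  inferInstanceAs (FiniteDimensional K (A ⧸ leibIdeal br))

/-- The canonical projection `A → A / Leib(A)`. -/
def mk : A →ₗ[K] h.LieQuotient := (leibIdeal br).mkQ

theorem mk_surjective : Function.Surjective h.mk := (leibIdeal br).mkQ_surjective

theorem ker_mk : LinearMap.ker h.mk = leibIdeal br := (leibIdeal br).ker_mkQ

/-- The left multiplication of `A / Leib(A)` on `A`; it is well defined because elements of
`Leib(A)` multiply `A` trivially from the left. -/
def leftAction : h.LieQuotient →ₗ[K] A →ₗ[K] A := (leibIdeal br).liftQ br h.leibIdeal_le_ker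

theorem leftAction_mem_leibIdeal (x : h.LieQuotient) {a : A} (ha : a ∈ leibIdeal br) :
    h.leftAction x a ∈ leibIdeal br := by
  obtain ⟨b, rfl⟩ := h.mk_surjective x
  exact h.apply_mem_leibIdeal b ha

instance : LieRing h.LieQuotient where
  bracket x := (leibIdeal br).mapQ (leibIdeal br) (h.leftAction x)
    fun _ ↦ h.leftAction_mem_leibIdeal x
  add_lie x y z := by
    obtain ⟨c, rfl⟩ := h.mk_surjective z
    exact congrArg h.mk (LinearMap.congr_fun (map_add h.leftAction x y) c)
  lie_add _ _ _ := map_add _ _ _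
  lie_self x := by
    obtain ⟨a, rfl⟩ := h.mk_surjective x
    exact (Submodule.Quotient.mk_eq_zero _).mpr (apply_self_mem_leibIdeal br a)
  leibniz_lie x y z := by
    obtain ⟨a, rfl⟩ := h.mk_surjective x
    obtain ⟨b, rfl⟩ := h.mk_surjective y
    obtain ⟨c, rfl⟩ := h.mk_surjective z
    exact congrArg h.mk (h a b c)

instance : LieAlgebra K h.LieQuotient where
  lie_smul _ _ _ := map_smul _ _ _

instance : LieRingModule h.LieQuotient A where
  bracket x := h.leftAction x
  add_lie x y := LinearMap.congr_fun (map_add h.leftAction x y)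
  lie_add x := map_add (h.leftAction x)
  leibniz_lie x y c := by
    obtain ⟨a, rfl⟩ := h.mk_surjective x
    obtain ⟨b, rfl⟩ := h.mk_surjective y
    exact h a b c

instance : LieModule K h.LieQuotient A where
  smul_lie t x := LinearMap.congr_fun (map_smul h.leftAction t x)
  lie_smul t x := map_smul (h.leftAction x) t

theorem mk_lie (a b : A) : ⁅h.mk a, b⁆ = br a b := rfl

/-- The canonical projection `A → A / Leib(A)` as a morphism of `A / Leib(A)`-modules. -/
def mkHom : A →ₗ⁅K, h.LieQuotient⁆ h.LieQuotient :=
  { h.mk with map_lie' := rfl }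

theorem exists_bracket_preserving_section [CharZero K] [FiniteDimensional K A]
    [IsSemisimple K h.LieQuotient] :
    ∃ σ : h.LieQuotient →ₗ[K] A, h.mk ∘ₗ σ = LinearMap.id ∧
      ∀ x y, br (σ x) (σ y) = σ ⁅x, y⁆ := by
  obtain ⟨s, hs⟩ := exists_equivariant_rightInverse (f := h.mkHom) h.mk_surjective
  refine ⟨s, LinearMap.ext hs, fun x y ↦ ?_⟩
  calc br (s x) (s y) = ⁅h.mk (s x), s y⁆ := (h.mk_lie _ _).symm
    _ = ⁅x, s y⁆ := congrArg (⁅·, s y⁆) (hs x)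
    _ = s ⁅x, y⁆ := (s.map_lie x y).symm

theorem hasTrivialRadical_lieQuotient
    (hss : ∀ I : Submodule K A, (∀ a : A, ∀ x ∈ I, br a x ∈ I ∧ br x a ∈ I) →
      (∃ m : ℕ, derSeriesIn br I m = ⊥) → I ≤ leibIdeal br) :
    HasTrivialRadical K h.LieQuotient := by
  refine (hasTrivialRadical_iff_no_abelian_ideals K h.LieQuotient).mpr fun I hI ↦ ?_
  let P : Submodule K A := I.toSubmodule.comap h.mk
  have P_ideal : ∀ a : A, ∀ x ∈ P, br a x ∈ P ∧ br x a ∈ P := fun a x hx ↦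
    ⟨I.lie_mem (x := h.mk a) hx, lie_mem_left K h.LieQuotient I (h.mk x) (h.mk a) hx⟩
  have br_mem_leibIdeal : ∀ a ∈ P, ∀ b ∈ P, br a b ∈ leibIdeal br := fun a ha b hb ↦ by
    rw [← h.ker_mk]
    exact congrArg Subtype.val (hI.trivial (⟨h.mk a, ha⟩ : I) (⟨h.mk b, hb⟩ : I))
  have P_le : P ≤ leibIdeal br := hss P P_ideal ⟨2, h.derSeriesIn_two_eq_bot br_mem_leibIdeal⟩
  refine (LieSubmodule.eq_bot_iff I).mpr fun x hx ↦ ?_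
  obtain ⟨a, rfl⟩ := h.mk_surjective x
  exact h.ker_mk.ge (P_le hx)

end IsLeftLeibniz

end LeftLeibniz

theorem isCompl_range_ker_of_comp_eq_id {R M N : Type*} [Ring R] [AddCommGroup M] [Module R M]
    [AddCommGroup N] [Module R N] {p : M →ₗ[R] N} {σ : N →ₗ[R] M} (h : p ∘ₗ σ = LinearMap.id) :
    IsCompl (LinearMap.range σ) (LinearMap.ker p) := by
  have left_inverse (x : N) : p (σ x) = x := LinearMap.congr_fun h x
  refine ⟨Submodule.disjoint_def.mpr ?_, codisjoint_iff_le_sup.mpr fun a _ ↦ ?_⟩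
  · rintro _ ⟨x, rfl⟩ hx
    rw [← left_inverse x, LinearMap.mem_ker.mp hx, map_zero]
  · refine Submodule.mem_sup.mpr ⟨σ (p a), ⟨p a, rfl⟩, a - σ (p a), ?_, add_sub_cancel _ _⟩
    rw [LinearMap.mem_ker, map_sub, left_inverse, sub_self]

theorem semisimple_leibniz_decomposition_general
    {K A : Type*} [Field K] [CharZero K] [AddCommGroup A] [Module K A] [FiniteDimensional K A]
    (br : A →ₗ[K] A →ₗ[K] A)
    (leibniz : ∀ a b c : A, br a (br b c) = br (br a b) c + br b (br a c))
    (hss : ∀ I : Submodule K A, (∀ a : A, ∀ x ∈ I, br a x ∈ I ∧ br x a ∈ I) →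
      (∃ m : ℕ, derSeriesIn br I m = ⊥) → I ≤ leibIdeal br) :
    ∃ (k : ℕ) (S : Fin k → Submodule K A),
      IsCompl (⨆ j, S j) (leibIdeal br) ∧
      iSupIndep S ∧
      (∀ x ∈ ⨆ j, S j, ∀ y ∈ ⨆ j, S j, br x y ∈ ⨆ j, S j) ∧
      (∀ x ∈ ⨆ j, S j, ∀ y ∈ ⨆ j, S j, br x y = -br y x) ∧
      (∀ j : Fin k, ∀ s ∈ ⨆ i, S i, ∀ x ∈ S j, br s x ∈ S j ∧ br x s ∈ S j) ∧
      (∀ j : Fin k, bracketSpan br (S j) (S j) ≠ ⊥ ∧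
        ∀ I : Submodule K A, I ≤ S j →
          (∀ s ∈ S j, ∀ x ∈ I, br s x ∈ I ∧ br x s ∈ I) →
          I = ⊥ ∨ I = S j) := by
  have h : IsLeftLeibniz br := leibniz
  have := h.hasTrivialRadical_lieQuotient hss
  obtain ⟨σ, hsection, hσ⟩ := h.exists_bracket_preserving_section
  have hinj : Function.Injective σ := Function.LeftInverse.injective (LinearMap.congr_fun hsection)
  obtain ⟨k, I, hatom, hindep, htop⟩ := exists_iSupIndep_isAtom_iSup_eq_top K h.LieQuotient
  refine ⟨k, fun j ↦ (I j).toSubmodule.map σ, ?_⟩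
  rw [iSup_map_lieIdeal_eq_range htop]
  refine ⟨h.ker_mk ▸ isCompl_range_ker_of_comp_eq_id hsection,
    σ.iSupIndep_map hinj (LieSubmodule.iSupIndep_toSubmodule.mpr hindep), ?_,
    fun _ hx _ hy ↦ apply_eq_neg_apply_of_mem_range hσ hx hy,
    fun j _ hs _ hx ↦ apply_mem_map_lieIdeal hσ (I j) hs hx, fun j ↦ ⟨?_, fun P hPI hP ↦ ?_⟩⟩
  · rintro _ ⟨x, rfl⟩ _ ⟨y, rfl⟩
    exact ⟨⁅x, y⁆, (hσ x y).symm⟩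
  · exact bracketSpan_map_self_ne_bot hσ hinj (IsSemisimple.non_abelian_of_isAtom (I j) (hatom j))
  · have := IsSemisimple.isSimple_of_isAtom (I j) (hatom j)
    exact eq_bot_or_eq_map_of_isSimple hσ (I j) hPI fun s hs x hx ↦ (hP s hs x hx).1

/-- a finite-dimensional semisimple (left) Leibniz algebra over an
algebraically closed field of characteristic zero (i.e. every solvable ideal is
contained in `Leib(A)`) decomposes as `A = (S_1 ⊕ ⋯ ⊕ S_k) ⊕ Leib(A)` where
`S = S_1 ⊕ ⋯ ⊕ S_k` is a subalgebra with antisymmetric bracket (a Lie algebra)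
and each `S_j` is an ideal of `S` that is a simple Lie algebra. -/
theorem semisimple_leibniz_decomposition
    {K A : Type*} [Field K] [IsAlgClosed K] [CharZero K]
    [AddCommGroup A] [Module K A] [FiniteDimensional K A]
    (br : A →ₗ[K] A →ₗ[K] A)
    (leibniz : ∀ a b c : A, br a (br b c) = br (br a b) c + br b (br a c))
    (hss : ∀ I : Submodule K A, (∀ a : A, ∀ x ∈ I, br a x ∈ I ∧ br x a ∈ I) →
      (∃ m : ℕ, derSeriesIn br I m = ⊥) → I ≤ leibIdeal br) :
    ∃ (k : ℕ) (S : Fin k → Submodule K A),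
      IsCompl (⨆ j, S j) (leibIdeal br) ∧
      iSupIndep S ∧
      (∀ x ∈ ⨆ j, S j, ∀ y ∈ ⨆ j, S j, br x y ∈ ⨆ j, S j) ∧
      (∀ x ∈ ⨆ j, S j, ∀ y ∈ ⨆ j, S j, br x y = -br y x) ∧
      (∀ j : Fin k, ∀ s ∈ ⨆ i, S i, ∀ x ∈ S j, br s x ∈ S j ∧ br x s ∈ S j) ∧
      (∀ j : Fin k, bracketSpan br (S j) (S j) ≠ ⊥ ∧
        ∀ I : Submodule K A, I ≤ S j →
          (∀ s ∈ S j, ∀ x ∈ I, br s x ∈ I ∧ br x s ∈ I) →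
          I = ⊥ ∨ I = S j) :=
  semisimple_leibniz_decomposition_general br leibniz hss
end
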